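/- (Crucial lemma.) Let A and U be nonempty sets with the discrete topology, let X ⊆ A^ℤ be a shift space, and let Ψ : X → U^ℤ be an extended sliding block code of finite degree. Let (x^k)_{k≥1} be a sequence in X such that Ψ(x^k) → y in U^ℤ as k → +∞. Then there exist a sequence of functions (h_ℓ)_{ℓ≥0}, each h_ℓ defined on a finite subset dom(h_ℓ) ⊆ ℤ with values in A and with h_{ℓ+1} extending h_ℓ, and a decreasing sequence (S_ℓ)_{ℓ≥0} of infinite subsets of ℕ, such that for every ℓ ≥ 0: the cylinder C_X(h_ℓ) is nonempty, x^k ∈ C_X(h_ℓ) for all k ∈ S_ℓ, C_X(h_{ℓ+1}) ⊆ C_X(h_ℓ), and Ψ(z)_j = y_j for every z ∈ C_X(h_ℓ) and every integer j with |j| ≤ ℓ. -/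

import Mathlib

open Filter Topology Set

namespace ShiftPaper

/-- The shift map `σ` on the full shift `A^ℤ`: `σ(x)_n = x_{n+1}`. -/
def shiftMap {A : Type*} (x : ℤ → A) : ℤ → A := fun n => x (n + 1)

/-- The `n`-th iterate of the shift: `σ^n(x)_m = x_{m+n}` (for `n : ℤ`). -/
def shiftIter {A : Type*} (n : ℤ) (x : ℤ → A) : ℤ → A := fun m => x (m + n)

/-- A shift space: a nonempty closed shift-invariant subset of the full shift. -/
def IsShiftSpace {A : Type*} [TopologicalSpace A] (X : Set (ℤ → A)) : Prop :=
  X.Nonempty ∧ IsClosed X ∧ shiftMap '' X = X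

/-- The cylinder in `X` determined by the finite set `s ⊆ ℤ` and the values of `h` on `s`:
`C_X(h) = X ∩ {x : x_i = h_i for all i ∈ s}`. -/
def cylX {A : Type*} (X : Set (ℤ → A)) (s : Finset ℤ) (h : ℤ → A) : Set (ℤ → A) :=
  X ∩ {x | ∀ i ∈ s, x i = h i}

/-- A barrier on `X`: a partition of `X` all of whose members are nonempty cylinders in `X`. -/
def IsBarrier {A : Type*} (X : Set (ℤ → A)) (B : Set (Set (ℤ → A))) : Prop :=
  (∀ C ∈ B, C.Nonempty ∧ ∃ (s : Finset ℤ) (h : ℤ → A), C = cylX X s h) ∧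
  (∀ x ∈ X, ∃! C, C ∈ B ∧ x ∈ C)

/-- `Ψ` is induced by the local rule `φ` on the barrier `B`:
`Ψ(x)_n = φ(C)` whenever `C ∈ B` contains `σ^n(x)`. -/
def InducedBy {A U : Type*} (X : Set (ℤ → A)) (Ψ : (ℤ → A) → ℤ → U)
    (B : Set (Set (ℤ → A))) (φ : Set (ℤ → A) → U) : Prop :=
  ∀ x ∈ X, ∀ n : ℤ, ∀ C ∈ B, shiftIter n x ∈ C → Ψ x n = φ C

/-- `Ψ` is an extended sliding block code on `X`. -/
def IsESBC {A U : Type*} (X : Set (ℤ → A)) (Ψ : (ℤ → A) → ℤ → U) : Prop :=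
  ∃ (B : Set (Set (ℤ → A))) (φ : Set (ℤ → A) → U), IsBarrier X B ∧ InducedBy X Ψ B φ

/-- `Ψ` is an extended sliding block code of finite degree: it is induced by a local rule `φ`
on a barrier `B` (so `B` is attached to `Ψ`) such that for each symbol `u` only finitely many
members of `B` have `φ`-value (i.e. `Ψ₀`-value) `u`. -/
def IsFiniteDegreeESBC {A U : Type*} (X : Set (ℤ → A)) (Ψ : (ℤ → A) → ℤ → U) : Prop :=
  ∃ (B : Set (Set (ℤ → A))) (φ : Set (ℤ → A) → U), IsBarrier X B ∧ InducedBy X Ψ B φ ∧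
    ∀ u : U, {C | C ∈ B ∧ φ C = u}.Finite

/-- The data produced by the crucial lemma for a distinguished sequence `x` with
`Ψ(x^k) → y`: a sequence of partial functions `h_ℓ` (with finite domains `s_ℓ`, each
extending the previous one) and a decreasing sequence `S_ℓ` of infinite subsets of `ℕ`,
such that `x^k ∈ C_X(h_ℓ)` for `k ∈ S_ℓ` and `Ψ(z)|_{[-ℓ,ℓ]} = y|_{[-ℓ,ℓ]}` on `C_X(h_ℓ)`. -/
def AssocData {A U : Type*} (X : Set (ℤ → A)) (Ψ : (ℤ → A) → ℤ → U)
    (x : ℕ → ℤ → A) (y : ℤ → U)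
    (s : ℕ → Finset ℤ) (h : ℕ → ℤ → A) (S : ℕ → Set ℕ) : Prop :=
  (∀ ℓ : ℕ, s ℓ ⊆ s (ℓ + 1)) ∧
  (∀ ℓ : ℕ, ∀ i ∈ s ℓ, h (ℓ + 1) i = h ℓ i) ∧
  (∀ ℓ : ℕ, (S ℓ).Infinite) ∧
  (∀ ℓ : ℕ, S (ℓ + 1) ⊆ S ℓ) ∧
  (∀ ℓ : ℕ, ∀ k ∈ S ℓ, x k ∈ cylX X (s ℓ) (h ℓ)) ∧
  (∀ ℓ : ℕ, ∀ z ∈ cylX X (s ℓ) (h ℓ), ∀ j : ℤ, |j| ≤ (ℓ : ℤ) → Ψ z j = y j)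

/-- The symbol `a` belongs to `L₁(X)`: it appears in some point of `X`. -/
def inLetter {A : Type*} (X : Set (ℤ → A)) (a : A) : Prop :=
  ∃ x ∈ X, ∃ i : ℤ, x i = a

/-- The two-letter word `ab` belongs to the language `L(X)`. -/
def inLang2 {A : Type*} (X : Set (ℤ → A)) (a b : A) : Prop :=
  ∃ x ∈ X, ∃ i : ℤ, x i = a ∧ x (i + 1) = b

/-- `X` is right-finite: for each allowed symbol `a`, only finitely many `b` with `ab ∈ L(X)`. -/
def RightFinite {A : Type*} (X : Set (ℤ → A)) : Prop :=
  ∀ a : A, inLetter X a → {b : A | inLang2 X a b}.Finite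

/-- `X` is left-finite: for each allowed symbol `a`, only finitely many `b` with `ba ∈ L(X)`. -/
def LeftFinite {A : Type*} (X : Set (ℤ → A)) : Prop :=
  ∀ a : A, inLetter X a → {b : A | inLang2 X b a}.Finite

end ShiftPaper

open ShiftPaper

/-!
Fix an ultrafilter `f ≤ atTop` along which `Ψ (x k)` tends to `y`. For each coordinate `j`, the
point `σ^j (x k)` eventually lies in one of the finitely many barrier members with value `y j`, so
`f` selects a single one of them, and shifting it back gives a cylinder that contains `x k` for
`f`-almost all `k` and on which `Ψ` has value `y j` at `j`. The selected cylinders agree where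
their supports overlap, since any two of them share a point `x k`. Hence they are all cut out by a
single `h : ℤ → A`, and the cylinder of the window `[-ℓ, ℓ]` is the intersection of those with
`|j| ≤ ℓ`, a finite intersection, so that it still contains `x k` for infinitely many `k`.
-/

namespace ShiftPaper

section Shift

variable {A : Type*} {X : Set (ℤ → A)}

theorem shiftMap_injective : Function.Injective (shiftMap : (ℤ → A) → ℤ → A) := fun x y hxy ↦
  funext fun n ↦ by simpa [shiftMap] using congrFun hxy (n - 1)

theorem shiftIter_zero (x : ℤ → A) : shiftIter 0 x = x :=
  funext fun m ↦ congrArg x (add_zero m)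

theorem shiftMap_shiftIter (n : ℤ) (x : ℤ → A) :
    shiftMap (shiftIter n x) = shiftIter (n + 1) x :=
  funext fun m ↦ congrArg x (by ring)

theorem shiftMap_mem_iff (hX : shiftMap '' X = X) {x : ℤ → A} : shiftMap x ∈ X ↔ x ∈ X := by
  conv_lhs => rw [← hX]
  exact shiftMap_injective.mem_set_image

theorem shiftIter_mem_iff (hX : shiftMap '' X = X) {x : ℤ → A} (n : ℤ) :
    shiftIter n x ∈ X ↔ x ∈ X := by
  induction n using Int.induction_on with
  | zero => rw [shiftIter_zero]
  | succ n ih => rw [← shiftMap_shiftIter, shiftMap_mem_iff hX, ih]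
  | pred n ih => rw [← shiftMap_mem_iff hX, shiftMap_shiftIter, sub_add_cancel, ih]

theorem shiftIter_mem_cylX_iff (hX : shiftMap '' X = X) {s : Finset ℤ} {h x : ℤ → A} (n : ℤ) :
    shiftIter n x ∈ cylX X s h ↔ x ∈ cylX X (s.map (addRightEmbedding n)) (shiftIter (-n) h) := by
  simp [cylX, shiftIter_mem_iff hX, shiftIter]

end Shift

section Cylinder

variable {A : Type*} {X : Set (ℤ → A)}

theorem cylX_anti {s t : Finset ℤ} (hst : s ⊆ t) (h : ℤ → A) : cylX X t h ⊆ cylX X s h :=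
  fun _ hz ↦ ⟨hz.1, fun i hi ↦ hz.2 i (hst hi)⟩

theorem mem_cylX_biUnion_iff {κ : Type*} {t : Finset κ} {s : κ → Finset ℤ} {h z : ℤ → A} :
    z ∈ cylX X (t.biUnion s) h ↔ z ∈ X ∧ ∀ j ∈ t, z ∈ cylX X (s j) h := by
  simp only [cylX, mem_inter_iff, mem_ofPred_eq, Finset.mem_biUnion]
  grind

theorem exists_forall_cylX_eq_of_eventually_mem {ι κ : Type*} {f : Filter ι} [f.NeBot]
    {x : ι → ℤ → A} {s : κ → Finset ℤ} {g : κ → ℤ → A}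
    (hg : ∀ j, ∀ᶠ k in f, x k ∈ cylX X (s j) (g j)) :
    ∃ h : ℤ → A, ∀ j, cylX X (s j) h = cylX X (s j) (g j) := by
  have : Nonempty A := f.nonempty_of_neBot.map (x · 0)
  have hglue (i : ℤ) : ∃ a, ∀ j, i ∈ s j → a = g j i := by
    by_cases hi : ∃ j₀, i ∈ s j₀
    · obtain ⟨j₀, hj₀⟩ := hi
      refine ⟨g j₀ i, fun j hj ↦ ?_⟩
      obtain ⟨k, hk₀, hk⟩ := ((hg j₀).and (hg j)).exists
      exact (hk₀.2 i hj₀).symm.trans (hk.2 i hj)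
    · exact ⟨Classical.arbitrary A, fun j hj ↦ absurd ⟨j, hj⟩ hi⟩
  choose h hh using hglue
  refine ⟨h, fun j ↦ ?_⟩
  ext z
  exact and_congr_right fun _ ↦ forall₂_congr fun i hi ↦ by rw [hh i j hi]

end Cylinder

section FiniteDegree

variable {A U ι : Type*} {X : Set (ℤ → A)} {Ψ : (ℤ → A) → ℤ → U} {f : Ultrafilter ι}
  {x : ι → ℤ → A}

theorem IsFiniteDegreeESBC.exists_cylX (hΨ : IsFiniteDegreeESBC X Ψ) (hX : shiftMap '' X = X)
    (hx : ∀ᶠ k in f, x k ∈ X) {j : ℤ} {u : U} (hu : ∀ᶠ k in f, Ψ (x k) j = u) :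
    ∃ (s : Finset ℤ) (g : ℤ → A),
      (∀ᶠ k in f, x k ∈ cylX X s g) ∧ ∀ z ∈ cylX X s g, Ψ z j = u := by
  obtain ⟨B, φ, ⟨hcyl, hpart⟩, hind, hfin⟩ := hΨ
  have hmem : ∀ᶠ k in f, ∃ C ∈ {C | C ∈ B ∧ φ C = u}, shiftIter j (x k) ∈ C := by
    filter_upwards [hx, hu] with k hk hku
    obtain ⟨C, hCB, hC⟩ := (hpart _ ((shiftIter_mem_iff hX j).2 hk)).exists
    exact ⟨C, ⟨hCB, (hind _ hk j C hCB hC).symm.trans hku⟩, hC⟩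
  obtain ⟨C, ⟨hCB, hCu⟩, hC⟩ := (Ultrafilter.eventually_exists_mem_iff (hfin u)).1 hmem
  obtain ⟨-, s, g, rfl⟩ := hcyl C hCB
  simp only [shiftIter_mem_cylX_iff hX] at hC
  refine ⟨_, _, hC, fun z hz ↦ ?_⟩
  rw [hind z hz.1 j _ hCB ((shiftIter_mem_cylX_iff hX j).2 hz), hCu]

theorem IsFiniteDegreeESBC.exists_forall_cylX (hΨ : IsFiniteDegreeESBC X Ψ)
    (hX : shiftMap '' X = X) (hx : ∀ᶠ k in f, x k ∈ X) {y : ℤ → U}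
    (hy : ∀ j, ∀ᶠ k in f, Ψ (x k) j = y j) :
    ∃ (s : ℤ → Finset ℤ) (h : ℤ → A),
      ∀ j, (∀ᶠ k in f, x k ∈ cylX X (s j) h) ∧ ∀ z ∈ cylX X (s j) h, Ψ z j = y j := by
  choose s g hmem hval using fun j ↦ hΨ.exists_cylX hX hx (hy j)
  obtain ⟨h, hh⟩ := exists_forall_cylX_eq_of_eventually_mem hmem
  refine ⟨s, h, fun j ↦ ?_⟩
  rw [hh]
  exact ⟨hmem j, hval j⟩

end FiniteDegree

end ShiftPaper

theorem crucial_lemma_general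
    {A U : Type*} [TopologicalSpace U] [DiscreteTopology U]
    {X : Set (ℤ → A)} (hX : shiftMap '' X = X)
    {Ψ : (ℤ → A) → ℤ → U} (hΨ : IsFiniteDegreeESBC X Ψ)
    {x : ℕ → ℤ → A} (hx : ∀ k, x k ∈ X)
    {y : ℤ → U} (hy : MapClusterPt y atTop fun k ↦ Ψ (x k)) :
    ∃ (s : ℕ → Finset ℤ) (h : ℕ → ℤ → A) (S : ℕ → Set ℕ),
      AssocData X Ψ x y s h S ∧
      (∀ ℓ : ℕ, (cylX X (s ℓ) (h ℓ)).Nonempty) ∧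
      (∀ ℓ : ℕ, cylX X (s (ℓ + 1)) (h (ℓ + 1)) ⊆ cylX X (s ℓ) (h ℓ)) := by
  obtain ⟨f, hf, hlim⟩ := mapClusterPt_iff_ultrafilter.1 hy
  simp only [tendsto_pi_nhds, nhds_discrete, tendsto_pure] at hlim
  obtain ⟨s, h, hs⟩ := hΨ.exists_forall_cylX hX (.of_forall hx) hlim
  let window (ℓ : ℕ) : Finset ℤ := (Finset.Icc (-ℓ : ℤ) ℓ).biUnion s
  have window_mono (ℓ : ℕ) : window ℓ ⊆ window (ℓ + 1) :=
    Finset.biUnion_subset_biUnion_of_subset_left s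
      (Finset.Icc_subset_Icc (by lia) (by lia))
  have cylX_window (ℓ : ℕ) : cylX X (window (ℓ + 1)) h ⊆ cylX X (window ℓ) h :=
    cylX_anti (window_mono ℓ) h
  have eventually_mem (ℓ : ℕ) : ∀ᶠ k in f, x k ∈ cylX X (window ℓ) h := by
    simp only [window, mem_cylX_biUnion_iff, hx, true_and, Filter.eventually_all_finset]
    exact fun j _ ↦ (hs j).1
  have infinite_visits (ℓ : ℕ) : {k | x k ∈ cylX X (window ℓ) h}.Infinite :=
    Nat.frequently_atTop_iff_infinite.1 ((eventually_mem ℓ).frequently.filter_mono hf)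
  have apply_eq (ℓ : ℕ) (z) (hz : z ∈ cylX X (window ℓ) h) (j : ℤ) (hj : |j| ≤ ℓ) : Ψ z j = y j :=
    (hs j).2 z ((mem_cylX_biUnion_iff.1 hz).2 j (Finset.mem_Icc.2 (abs_le.1 hj)))
  exact ⟨window, fun _ ↦ h, fun ℓ ↦ {k | x k ∈ cylX X (window ℓ) h},
    ⟨window_mono, fun _ _ _ ↦ rfl, infinite_visits, fun ℓ _ hk ↦ cylX_window ℓ hk,
      fun _ _ hk ↦ hk, apply_eq⟩,
    fun ℓ ↦ (infinite_visits ℓ).nonempty.imp' x fun _ hk ↦ hk, cylX_window⟩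

/-- Crucial lemma: for a finite degree ESBC `Ψ` and a sequence `x^k` in `X`
with `Ψ(x^k) → y`, there are partial functions `h_ℓ` (finite domains `s_ℓ`, each extending
the previous) and a decreasing sequence of infinite sets `S_ℓ ⊆ ℕ` such that the cylinders
`C_X(h_ℓ)` are nonempty and nested, contain `x^k` for `k ∈ S_ℓ`, and `Ψ(z)_j = y_j` for
every `z ∈ C_X(h_ℓ)` and `|j| ≤ ℓ`. -/
theorem crucial_lemma
    {A U : Type*} [TopologicalSpace A] [DiscreteTopology A] [Nonempty A]
    [TopologicalSpace U] [DiscreteTopology U] [Nonempty U]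
    (X : Set (ℤ → A)) (hX : IsShiftSpace X)
    (Ψ : (ℤ → A) → ℤ → U) (hΨ : IsFiniteDegreeESBC X Ψ)
    (x : ℕ → ℤ → A) (hx : ∀ k, x k ∈ X)
    (y : ℤ → U) (hconv : Tendsto (fun k => Ψ (x k)) atTop (𝓝 y)) :
    ∃ (s : ℕ → Finset ℤ) (h : ℕ → ℤ → A) (S : ℕ → Set ℕ),
      AssocData X Ψ x y s h S ∧
      (∀ ℓ : ℕ, (cylX X (s ℓ) (h ℓ)).Nonempty) ∧
      (∀ ℓ : ℕ, cylX X (s (ℓ + 1)) (h (ℓ + 1)) ⊆ cylX X (s ℓ) (h ℓ)) := by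
  exact crucial_lemma_general hX.2.2 hΨ hx hconv.mapClusterPt
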